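/- arXiv:2205.13427 — 3 statements merged into one kernel-verified Lean document; each statement's English description precedes it below -/
import Mathlib

section
/- Let p be a prime and let i be a positive integer not divisible by p. Then the element N_i = 1 + γ + ⋯ + γ^{i−1} is a unit in the group algebra ℤ_{(p)}[ℤ/p] of the cyclic group of order p over the localization of ℤ at the prime p. -/
theorem aux_geom {A : Type*} [CommRing A] (g : A) (i j : ℕ) :
    ∑ m ∈ Finset.range (i * j), g ^ m
      = (∑ m ∈ Finset.range i, g ^ m) * ∑ m ∈ Finset.range j, (g ^ i) ^ m := by
  induction j with
  | zero => simp
  | succ j ih =>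
    rw [Nat.mul_succ, Finset.sum_range_add, ih, Finset.sum_range_succ _ j, mul_add, Finset.sum_mul _ _ ((g ^ i) ^ j)]
    congr 1
    refine Finset.sum_congr rfl fun m _ => ?_
    rw [← pow_mul, ← pow_add, add_comm]

theorem aux_unit {A : Type*} [CommRing A] (g : A) (p i j k : ℕ) (hg : g ^ p = 1)
    (h : i * j = p * k + 1) (hu : IsUnit ((p * k + 1 : ℕ) : A)) :
    IsUnit (∑ m ∈ Finset.range i, g ^ m) := by
  obtain ⟨u, hu⟩ := hu.exists_right_inv
  have h1 := aux_geom g i j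
  rw [h, Finset.sum_range_succ, aux_geom, pow_mul, hg] at h1
  simp only [one_pow, Finset.sum_const, Finset.card_range, nsmul_eq_mul, mul_one] at h1
  set N := ∑ m ∈ Finset.range p, g ^ m with hN
  have hgN : g * N = N := by
    have := mul_geom_sum g p
    rw [hg, ← hN] at this
    linear_combination this
  have hpow : ∀ m, g ^ m * N = N := by
    intro m
    induction m with
    | zero => simp
    | succ m ih => rw [pow_succ, mul_assoc, hgN, ih]
  have hNN : N * N = p * N := by
    conv_lhs => rw [hN, Finset.sum_mul]
    simp [← hN, hpow]
  push_cast at hu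
  refine IsUnit.of_mul_eq_one ((∑ m ∈ Finset.range j, (g ^ i) ^ m) * (1 - k * u * N)) ?_
  rw [← mul_assoc, ← h1]
  linear_combination (-(k:A)^2 * u) * hNN - (k:A) * N * hu

/-- For a prime `p` and a positive integer `i` not divisible by `p`,
the norm-like element `N_i = 1 + γ + ⋯ + γ^{i−1}` is a unit in the group algebra
`ℤ_{(p)}[ℤ/p]`, where `ℤ_{(p)}` is the localization of `ℤ` at the prime `(p)`. -/
theorem statement1 (p : ℕ) (hp : p.Prime) (i : ℕ) (hi : 0 < i) (hpi : ¬ (p : ℤ) ∣ i)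
    [hP : (Ideal.span {(p : ℤ)}).IsPrime]
    (γ : MonoidAlgebra (Localization.AtPrime (Ideal.span {(p : ℤ)})) (Multiplicative (ZMod p)))
    (hγ : γ = MonoidAlgebra.of (Localization.AtPrime (Ideal.span {(p : ℤ)}))
      (Multiplicative (ZMod p)) (Multiplicative.ofAdd (1 : ZMod p))) :
    IsUnit (∑ m ∈ Finset.range i, γ ^ m) := by
  have hc : Nat.Coprime i p := by
    rw [Nat.coprime_comm, hp.coprime_iff_not_dvd]
    exact_mod_cast hpi
  obtain ⟨j, hj⟩ := Nat.exists_mul_mod_eq_one_of_coprime hc hp.one_lt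
  have h : i * j = p * (i * j / p) + 1 := by
    conv_lhs => rw [← Nat.div_add_mod (i * j) p, hj.2]
  refine aux_unit γ p i j (i * j / p) ?_ h ?_
  · rw [hγ, ← map_pow, ← ofAdd_nsmul]
    simp [MonoidAlgebra.one_def]
  · have hn : IsUnit ((p * (i * j / p) + 1 : ℕ) :
        Localization.AtPrime (Ideal.span {(p : ℤ)})) := by
      have := IsLocalization.map_units (Localization.AtPrime (Ideal.span {(p : ℤ)}))
        (M := (Ideal.span {(p : ℤ)}).primeCompl) ⟨((p * (i * j / p) + 1 : ℕ) : ℤ), by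
          intro hm
          rw [SetLike.mem_coe, Ideal.mem_span_singleton, Int.natCast_dvd_natCast] at hm
          exact hp.one_lt.ne' (Nat.dvd_one.1 ((Nat.dvd_add_right (dvd_mul_right _ _)).1 hm))⟩
      simpa only [map_natCast] using this
    have := hn.map (algebraMap _ (MonoidAlgebra (Localization.AtPrime (Ideal.span {(p : ℤ)}))
      (Multiplicative (ZMod p))))
    rwa [map_natCast] at this
end

section
/- Let p be a prime, R = 𝔽_p[ℤ/p] the group algebra of the cyclic group of order p over the field with p elements, and for 1 ≤ i ≤ p let L_i = R/((γ−1)^i). Then for every j with 1 ≤ j ≤ p there is a short exact sequence of R-modules 0 → L_{p+1−j} → L_1 ⊕ L_p → L_j → 0. -/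
/-- The group algebra `𝔽_p[ℤ/p]`. -/
abbrev GrpAlg (p : ℕ) : Type := MonoidAlgebra (ZMod p) (Multiplicative (ZMod p))

/-- The generator `γ` of `ℤ/p`, viewed in the group algebra. -/
noncomputable def gammaEl (p : ℕ) : GrpAlg p :=
  MonoidAlgebra.of (ZMod p) (Multiplicative (ZMod p)) (Multiplicative.ofAdd (1 : ZMod p))

/-- The module `L_i = R/((γ−1)^i)`, on which `γ` acts by a Jordan block of size `i`. -/
abbrev Ljordan (p i : ℕ) : Type := GrpAlg p ⧸ Ideal.span {(gammaEl p - 1) ^ i}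

open Polynomial in
theorem aux_gamma_pow (p n : ℕ) : (gammaEl p) ^ n =
    MonoidAlgebra.single (Multiplicative.ofAdd ((n : ZMod p))) (1 : ZMod p) := by
  unfold gammaEl
  rw [← map_pow, MonoidAlgebra.of_apply, ← ofAdd_nsmul]
  simp

open Polynomial in
theorem aux_surj (p : ℕ) [Fact p.Prime] (c : GrpAlg p) :
    ∃ P : (ZMod p)[X], aeval (gammaEl p - 1) P = c := by
  have h : ∃ P : (ZMod p)[X], aeval (gammaEl p) P = c := by
    induction c using MonoidAlgebra.induction_on with
    | of g =>
      refine ⟨X ^ (Multiplicative.toAdd g).val, ?_⟩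
      rw [map_pow, aeval_X, aux_gamma_pow, ZMod.natCast_zmod_val]
      simp [MonoidAlgebra.of_apply]
    | add a b ha hb =>
      obtain ⟨P, rfl⟩ := ha
      obtain ⟨Q, rfl⟩ := hb
      exact ⟨P + Q, map_add _ _ _⟩
    | smul r a ha =>
      obtain ⟨P, rfl⟩ := ha
      exact ⟨r • P, map_smul _ _ _⟩
  obtain ⟨P, hP⟩ := h
  refine ⟨P.comp (X + 1), ?_⟩
  rw [aeval_comp]
  simpa using hP

theorem aux_nil (p : ℕ) [Fact p.Prime] : (gammaEl p - 1) ^ p = 0 := by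
  have : CharP (GrpAlg p) p := charP_of_injective_algebraMap
    (algebraMap (ZMod p) (GrpAlg p)).injective p
  rw [sub_pow_char, aux_gamma_pow]
  simp [MonoidAlgebra.one_def]

open Polynomial in
theorem aux_low (p : ℕ) [Fact p.Prime] (Q : (ZMod p)[X]) (hd : Q.natDegree < p)
    (h : aeval (gammaEl p) Q = 0) : Q = 0 := by
  ext i
  by_cases hi : p ≤ i
  · rw [coeff_eq_zero_of_natDegree_lt (by omega)]; simp
  push Not at hi
  rw [aeval_eq_sum_range' hd] at h
  have h2 := congrArg (fun x : GrpAlg p => x.coeff (Multiplicative.ofAdd (i : ZMod p))) h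
  simp only [aux_gamma_pow] at h2
  simp only [MonoidAlgebra.coeff_sum, MonoidAlgebra.coeff_smul, MonoidAlgebra.coeff_single, Finsupp.finsetSum_apply, Finsupp.smul_apply, Finsupp.single_apply] at h2
  rw [Finset.sum_eq_single i] at h2
  · simpa using h2
  · intro b hb hbi
    rw [if_neg, smul_zero]
    intro hh
    apply hbi
    have h3 : (b : ZMod p) = i := Multiplicative.ofAdd.injective hh
    rw [ZMod.natCast_eq_natCast_iff] at h3
    exact Nat.ModEq.eq_of_lt_of_lt h3 (Finset.mem_range.1 hb) hi
  · intro hh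
    exact absurd (Finset.mem_range.2 hi) hh

open Polynomial in
theorem aux_dvd (p : ℕ) [hp : Fact p.Prime] (P : (ZMod p)[X])
    (h : aeval (gammaEl p - 1) P = 0) : X ^ p ∣ P := by
  have hm : (X ^ p : (ZMod p)[X]).Monic := monic_X_pow p
  rw [← modByMonic_eq_zero_iff_dvd hm]
  set Q := P %ₘ X ^ p with hQ
  have hQ0 : aeval (gammaEl p - 1) Q = 0 := by
    rw [← modByMonic_add_div P (X ^ p)] at h
    simpa [aux_nil] using h
  have hd : Q.natDegree < p := by
    have := natDegree_modByMonic_lt P hm (by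
      intro h1
      have := congrArg natDegree h1
      simp at this
      exact hp.out.ne_zero this)
    simpa using this
  have h1 : Q.comp (X - C 1) = 0 := by
    apply aux_low p
    · rw [natDegree_comp, natDegree_X_sub_C]; omega
    · rw [aeval_comp]; simpa using hQ0
  have h2 : (Q.comp (X - C 1)).comp (X + C 1) = Q := by
    rw [comp_assoc]; simp
  rw [← h2, h1, zero_comp]

open Polynomial in
theorem aux_ann (p : ℕ) [Fact p.Prime] (k l : ℕ) (hkl : k + l = p) (c : GrpAlg p)
    (h : (gammaEl p - 1) ^ k * c = 0) : (gammaEl p - 1) ^ l ∣ c := by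
  obtain ⟨P, rfl⟩ := aux_surj p c
  have h1 : X ^ p ∣ X ^ k * P := aux_dvd p _ (by simpa using h)
  have e : (X ^ p : (ZMod p)[X]) = X ^ k * X ^ l := by
    rw [← pow_add]; exact congrArg _ hkl.symm
  rw [e] at h1
  obtain ⟨S, rfl⟩ := (mul_dvd_mul_iff_left (pow_ne_zero k X_ne_zero)).1 h1
  exact ⟨aeval (gammaEl p - 1) S, by simp⟩

/-- For a prime `p` and `1 ≤ j ≤ p`, there is a short exact sequence of
`𝔽_p[ℤ/p]`-modules `0 → L_{p+1−j} → L_1 ⊕ L_p → L_j → 0`. -/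
theorem statement4 (p : ℕ) (hp : p.Prime) (j : ℕ) (hj1 : 1 ≤ j) (hjp : j ≤ p) :
    ∃ (f : Ljordan p (p + 1 - j) →ₗ[GrpAlg p] Ljordan p 1 × Ljordan p p)
      (g : Ljordan p 1 × Ljordan p p →ₗ[GrpAlg p] Ljordan p j),
      Function.Injective f ∧ Function.Surjective g ∧ LinearMap.range f = LinearMap.ker g := by
  have : Fact p.Prime := ⟨hp⟩
  obtain ⟨k, rfl⟩ : ∃ k, j = k + 1 := ⟨j - 1, by omega⟩
  have hann := aux_ann p k (p + 1 - (k + 1)) (by omega)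
  have hnil := aux_nil p
  set T := gammaEl p - 1 with hT
  have e : T ^ k * T ^ (p + 1 - (k + 1)) = T ^ p := by rw [← pow_add]; congr 1; omega
  let mk (i : ℕ) : GrpAlg p →ₗ[GrpAlg p] Ljordan p i := Submodule.mkQ _
  have mk0 (i : ℕ) (x : GrpAlg p) : mk i x = 0 ↔ T ^ i ∣ x := by
    rw [← Ideal.mem_span_singleton]
    exact Submodule.Quotient.mk_eq_zero _
  have mks (i : ℕ) : Function.Surjective (mk i) := Submodule.mkQ_surjective _
  let f0 : GrpAlg p →ₗ[GrpAlg p] Ljordan p 1 × Ljordan p p :=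
    (mk 1).prod (-((mk p).comp (LinearMap.mulLeft (GrpAlg p) (T ^ k))))
  let f : Ljordan p (p + 1 - (k + 1)) →ₗ[GrpAlg p] Ljordan p 1 × Ljordan p p :=
    Submodule.liftQ _ f0 (by
      intro x hx
      obtain ⟨y, rfl⟩ := Ideal.mem_span_singleton.1 hx
      refine LinearMap.mem_ker.2 (Prod.ext ?_ ?_)
      · exact (mk0 1 _).2 ((pow_dvd_pow T (by omega)).mul_right y)
      · refine neg_eq_zero.2 ((mk0 p _).2 ⟨y, ?_⟩)
        change T ^ k * (T ^ _ * y) = _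
        rw [← mul_assoc, e])
  let g1 : Ljordan p 1 →ₗ[GrpAlg p] Ljordan p (k + 1) :=
    Submodule.liftQ _ ((mk (k + 1)).comp (LinearMap.mulLeft (GrpAlg p) (T ^ k))) (by
      intro x hx
      obtain ⟨y, rfl⟩ := Ideal.mem_span_singleton.1 hx
      refine LinearMap.mem_ker.2 ((mk0 _ _).2 ⟨y, ?_⟩)
      change T ^ k * (T ^ 1 * y) = _
      ring)
  let g2 : Ljordan p p →ₗ[GrpAlg p] Ljordan p (k + 1) :=
    Submodule.liftQ _ (mk (k + 1)) (by
      intro x hx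
      obtain ⟨y, rfl⟩ := Ideal.mem_span_singleton.1 hx
      exact LinearMap.mem_ker.2 ((mk0 _ _).2 ((pow_dvd_pow T hjp).mul_right y)))
  have hf (c : GrpAlg p) : f (mk _ c) = (mk 1 c, - mk p (T ^ k * c)) := rfl
  have hg (a b : GrpAlg p) : (g1.coprod g2) (mk 1 a, mk p b) = mk (k + 1) (T ^ k * a + b) := by
    rw [map_add]; rfl
  refine ⟨f, g1.coprod g2, ?_, ?_, ?_⟩
  · rw [injective_iff_map_eq_zero]
    intro x hx
    obtain ⟨c, rfl⟩ := mks _ x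
    rw [hf] at hx
    have h2 := (mk0 p _).1 (neg_eq_zero.1 (congrArg Prod.snd hx))
    rw [hnil, zero_dvd_iff] at h2
    exact (mk0 _ _).2 (hann c h2)
  · intro y
    obtain ⟨b, rfl⟩ := mks _ y
    exact ⟨(mk 1 0, mk p b), by rw [hg]; simp⟩
  · ext ⟨x, y⟩
    obtain ⟨a, rfl⟩ := mks _ x
    obtain ⟨b, rfl⟩ := mks _ y
    rw [LinearMap.mem_ker, hg, mk0, LinearMap.mem_range]
    constructor
    · rintro ⟨z, hz⟩
      obtain ⟨c, rfl⟩ := mks _ z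
      rw [hf] at hz
      have h1 := congrArg Prod.fst hz
      have h2 := congrArg Prod.snd hz
      simp only at h1 h2
      rw [← sub_eq_zero, ← map_sub, mk0] at h1
      rw [← map_neg, ← sub_eq_zero, ← map_sub, mk0] at h2
      obtain ⟨u, hu⟩ := h1
      rw [hnil, zero_dvd_iff] at h2
      refine ⟨-u, ?_⟩
      linear_combination (-T ^ k) * hu - h2
    · rintro ⟨d, hd⟩
      refine ⟨mk _ (a - T * d), ?_⟩
      rw [hf]
      refine Prod.ext ?_ ?_
      · simp only
        rw [← sub_eq_zero, ← map_sub, mk0]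
        exact ⟨-d, by ring⟩
      · simp only
        rw [← map_neg, ← sub_eq_zero, ← map_sub, mk0, hnil, zero_dvd_iff]
        linear_combination -hd
end

section
/- Let p be an odd prime, B = 𝔽_p[t,u]/(u²) the commutative 𝔽_p-algebra on a polynomial generator t and a generator u with u² = 0, and J = (t,u) ⊆ B the ideal generated by t and u. Then for every i ≥ 1 the B-module Tor_i^B(J, J) is annihilated by J and is a 2-dimensional vector space over 𝔽_p. -/
open CategoryTheory

/-- The commutative `𝔽_p`-algebra `B = 𝔽_p[t,u]/(u²)`. -/
abbrev Balg (p : ℕ) : Type :=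
  MvPolynomial (Fin 2) (ZMod p) ⧸ Ideal.span {(MvPolynomial.X 1 : MvPolynomial (Fin 2) (ZMod p)) ^ 2}

/-- The polynomial generator `t` of `B`. -/
noncomputable def tB (p : ℕ) : Balg p :=
  Ideal.Quotient.mk _ (MvPolynomial.X 0)

/-- The exterior generator `u` of `B`, satisfying `u² = 0`. -/
noncomputable def uB (p : ℕ) : Balg p :=
  Ideal.Quotient.mk _ (MvPolynomial.X 1)

/-- The ideal `J = (t,u) ⊆ B`. -/
noncomputable def Jid (p : ℕ) : Ideal (Balg p) := Ideal.span {tB p, uB p}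

open CategoryTheory Limits

section Gen
universe v u
variable {C : Type u} [Category.{v} C] [Abelian C]

noncomputable def perCx (X : C) (D : X ⟶ X) (hD : D ≫ D = 0) : ChainComplex C ℕ :=
  ChainComplex.of (fun _ => X) (fun _ => D) (fun _ => hD)

lemma perCx_d (X : C) (D : X ⟶ X) (hD : D ≫ D = 0) (n : ℕ) :
    (perCx X D hD).d (n+1) n = D := by
  exact ChainComplex.of_d (fun _ => X) (fun _ => D) n

noncomputable def perRes {X Z : C} [Projective X] (D : X ⟶ X) (hD : D ≫ D = 0) (e : X ⟶ Z)
    (he : D ≫ e = 0) (h1 : (ShortComplex.mk D D hD).Exact) (h2 : (ShortComplex.mk D e he).Exact)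
    [Epi e] : ProjectiveResolution Z where
  complex := perCx X D hD
  projective _ := inferInstanceAs (Projective X)
  π := (ChainComplex.toSingle₀Equiv _ _).symm ⟨e, by rw [perCx_d]; exact he⟩
  quasiIso := ⟨fun n => by
    cases n with
    | zero =>
      rw [ChainComplex.quasiIsoAt₀_iff, ShortComplex.quasiIso_iff_of_zeros']
      · refine (ShortComplex.exact_and_epi_g_iff_of_iso ?_).2
          ⟨h2, by dsimp; infer_instance⟩
        refine ShortComplex.isoMk (Iso.refl X) (Iso.refl X) (Iso.refl Z) ?_ ?_
        · refine (Category.id_comp _).trans (Eq.trans ?_ (Category.comp_id _).symm)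
          exact (perCx_d X D hD 0).symm
        · refine (Category.id_comp _).trans (Eq.trans ?_ (Category.comp_id _).symm)
          symm
          refine (HomologicalComplex.mkHomToSingle_f (K := perCx X D hD) (j := 0) e (by
            rintro i hi
            obtain rfl : 0 + 1 = i := hi
            rw [perCx_d]; exact he)).trans ?_
          exact Category.comp_id e
      all_goals rfl
    | succ n =>
      rw [quasiIsoAt_iff_exactAt' (hL := ChainComplex.exactAt_succ_single_obj ..),
        HomologicalComplex.exactAt_iff' _ (n + 1 + 1) (n + 1) n (by simp) (by simp)]
      refine (ShortComplex.exact_iff_of_iso ?_).2 h1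
      refine ShortComplex.isoMk (Iso.refl X) (Iso.refl X) (Iso.refl X) ?_ ?_
      · refine (Category.id_comp _).trans (Eq.trans ?_ (Category.comp_id _).symm)
        exact (perCx_d X D hD _).symm
      · refine (Category.id_comp _).trans (Eq.trans ?_ (Category.comp_id _).symm)
        exact (perCx_d X D hD _).symm⟩

noncomputable def perSc {X : C} (D : X ⟶ X) (hD : D ≫ D = 0)
    (F : C ⥤ C) [F.Additive] (Y : C) (y : F.obj X ≅ Y) (D' : Y ⟶ Y) (hD' : D' ≫ D' = 0)
    (hy : F.map D ≫ y.hom = y.hom ≫ D') (n : ℕ) :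
    ((F.mapHomologicalComplex _).obj (perCx X D hD)).sc' (n+2) (n+1) n ≅
      ShortComplex.mk D' D' hD' := by
  refine ShortComplex.isoMk y y y ?_ ?_
  · exact (hy.symm.trans (congrArg (fun f => F.map f ≫ y.hom) (perCx_d X D hD (n+1)).symm))
  · exact (hy.symm.trans (congrArg (fun f => F.map f ≫ y.hom) (perCx_d X D hD n).symm))

noncomputable def perHom {X : C} (D : X ⟶ X) (hD : D ≫ D = 0)
    (F : C ⥤ C) [F.Additive] (Y : C) (y : F.obj X ≅ Y) (D' : Y ⟶ Y) (hD' : D' ≫ D' = 0)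
    (hy : F.map D ≫ y.hom = y.hom ≫ D') (n : ℕ) :
    ((F.mapHomologicalComplex _).obj (perCx X D hD)).homology (n+1) ≅
      (ShortComplex.mk D' D' hD').homology :=
  ((F.mapHomologicalComplex _).obj (perCx X D hD)).homologyIsoSc' (n+2) (n+1) n
    (by simp) (by simp) ≪≫ ShortComplex.homologyMapIso (perSc D hD F Y y D' hD' hy n)

noncomputable def perDer {X Z : C} [Projective X] (D : X ⟶ X) (hD : D ≫ D = 0) (e : X ⟶ Z)
    (he : D ≫ e = 0) (h1 : (ShortComplex.mk D D hD).Exact) (h2 : (ShortComplex.mk D e he).Exact)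
    [Epi e] [HasProjectiveResolutions C] (F : C ⥤ C) [F.Additive] (Y : C) (y : F.obj X ≅ Y) (D' : Y ⟶ Y) (hD' : D' ≫ D' = 0)
    (hy : F.map D ≫ y.hom = y.hom ≫ D') (n : ℕ) :
    (F.leftDerived (n+1)).obj Z ≅ (ShortComplex.mk D' D' hD').homology :=
  (perRes D hD e he h1 h2).isoLeftDerivedObj F (n+1) ≪≫ perHom D hD F Y y D' hD' hy n

end Gen

section Ring
variable {R : Type} [CommRing R] (t u : R)

/-- The differential on `M × M`. -/
def DD (M : Type) [AddCommGroup M] [Module R M] : M × M →ₗ[R] M × M where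
  toFun v := (u • v.1 + t • v.2, - (u • v.2))
  map_add' v w := by ext <;> simp <;> abel
  map_smul' r v := by ext <;> simp [smul_comm r]

lemma DD_apply (M : Type) [AddCommGroup M] [Module R M] (v : M × M) :
    DD t u M v = (u • v.1 + t • v.2, - (u • v.2)) := rfl

lemma DD_DD (hu : u * u = 0) (M : Type) [AddCommGroup M] [Module R M] (v : M × M) :
    DD t u M (DD t u M v) = 0 := by
  ext
  · simp [DD_apply, smul_smul, hu, mul_comm t u]
  · simp [DD_apply, smul_smul, hu]

lemma DD_ker (h1 : ∀ y : R, u * y = 0 → ∃ z, y = u * z)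
    (h2 : ∀ x y : R, u * x + t * y = 0 → ∃ z, y = u * z) (x y : R) (h : u * x + t * y = 0) :
    ∃ w, DD t u R w = (x, y) := by
  obtain ⟨z, rfl⟩ := h2 x y h
  obtain ⟨w, hw⟩ := h1 (x + t * z) (by linear_combination h)
  refine ⟨(w, -z), ?_⟩
  ext
  · simp [DD_apply]; linear_combination -hw
  · simp [DD_apply]

def eps : R × R →ₗ[R] (Ideal.span {t, u} : Ideal R) where
  toFun v := ⟨u * v.1 + t * v.2, by
    refine add_mem (Ideal.mul_mem_right _ _ (Ideal.subset_span (by simp)))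
      (Ideal.mul_mem_right _ _ (Ideal.subset_span (by simp)))⟩
  map_add' v w := by ext; simp; ring
  map_smul' r v := by ext; simp; ring

lemma eps_surj : Function.Surjective (eps t u) := by
  rintro ⟨x, hx⟩
  obtain ⟨a, b, h⟩ := Ideal.mem_span_pair.1 hx
  exact ⟨(b, a), Subtype.ext (by simp [eps]; linear_combination h)⟩

/-- `J ⊗ (R × R) ≃ J × J`. -/
noncomputable def yy (M : Type) [AddCommGroup M] [Module R M] :
    TensorProduct R M (R × R) ≃ₗ[R] M × M :=
  TensorProduct.prodRight R R M R R ≪≫ₗ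
    (TensorProduct.rid R M).prodCongr (TensorProduct.rid R M)

lemma yy_comm (M : Type) [AddCommGroup M] [Module R M] :
    (yy M).toLinearMap ∘ₗ (DD t u R).lTensor M = DD t u M ∘ₗ (yy M).toLinearMap := by
  apply TensorProduct.ext'
  rintro m ⟨a, b⟩
  ext <;> simp [yy, DD_apply, add_smul, smul_smul]

open MonoidalCategory in
theorem torJ (hu : u * u = 0) (h1 : ∀ y : R, u * y = 0 → ∃ z, y = u * z)
    (h2 : ∀ x y : R, u * x + t * y = 0 → ∃ z, y = u * z) (J : Ideal R) (hJ : J = Ideal.span {t, u})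
    (n : ℕ) :
    ∃ g : R × R →ₗ[R] (((Tor (ModuleCat R) (n+1)).obj
        (ModuleCat.of R J)).obj (ModuleCat.of R J) : ModuleCat R),
      Function.Surjective g ∧ ∀ v, g v = 0 ↔ v.1 ∈ J ∧ v.2 ∈ J := by
  subst hJ
  set J : Ideal R := Ideal.span {t, u} with hJ
  have tJ : t ∈ J := Ideal.subset_span (by simp)
  have uJ : u ∈ J := Ideal.subset_span (by simp)
  have z1 : ModuleCat.ofHom (DD t u R) ≫ ModuleCat.ofHom (DD t u R) = 0 := by
    apply ModuleCat.hom_ext; apply LinearMap.ext; intro v; exact DD_DD t u hu R v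
  have z1' : ModuleCat.ofHom (DD t u J) ≫ ModuleCat.ofHom (DD t u J) = 0 := by
    apply ModuleCat.hom_ext; apply LinearMap.ext; intro v; exact DD_DD t u hu J v
  have z2 : ModuleCat.ofHom (DD t u R) ≫ ModuleCat.ofHom (eps t u) = 0 := by
    apply ModuleCat.hom_ext; apply LinearMap.ext; intro v
    exact Subtype.ext (congrArg Prod.fst (DD_DD t u hu R v))
  have e1 : (ShortComplex.mk _ _ z1).Exact := by
    rw [ShortComplex.moduleCat_exact_iff]
    rintro ⟨x, y⟩ hv
    exact DD_ker t u h1 h2 x y (congrArg Prod.fst hv)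
  have e2 : (ShortComplex.mk _ _ z2).Exact := by
    rw [ShortComplex.moduleCat_exact_iff]
    rintro ⟨x, y⟩ hv
    exact DD_ker t u h1 h2 x y (congrArg Subtype.val hv)
  have : Epi (ModuleCat.ofHom (eps t u)) := (ModuleCat.epi_iff_surjective _).2 (eps_surj t u)
  have : Projective (ModuleCat.of R (R × R)) :=
    (IsProjective.iff_projective (R := R) (R × R)).1 inferInstance
  let I := perDer _ z1 _ z2 e1 e2 ((tensoringLeft (ModuleCat R)).obj (ModuleCat.of R J))
    (ModuleCat.of R (J × J)) (LinearEquiv.toModuleIso (yy J)) (ModuleCat.ofHom (DD t u J)) z1'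
    (by
      ext : 1
      exact yy_comm t u J) n
  let S := ShortComplex.mk _ _ z1'
  let E := (I ≪≫ S.moduleCatHomologyIso).toLinearEquiv
  -- the map from `R × R`
  let q : R × R →ₗ[R] J × J :=
    { toFun := fun v => (eps t u v, - ⟨u * v.2, Ideal.mul_mem_right _ _ uJ⟩)
      map_add' := fun v w => by ext <;> simp [eps] <;> ring
      map_smul' := fun r v => by ext <;> simp [eps] <;> ring }
  have hq : ∀ v, (((q v).1 : R), ((q v).2 : R)) = DD t u R v := fun v => rfl
  have hDJ : ∀ w : J × J, DD t u J w = q (w.1, w.2) := fun w => rfl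
  let q' : R × R →ₗ[R] LinearMap.ker S.g.hom := q.codRestrict _ (fun v => by
    have := DD_DD t u hu R v
    exact Prod.ext (Subtype.ext (congrArg Prod.fst this)) (Subtype.ext (congrArg Prod.snd this)))
  let g' : R × R →ₗ[R] (LinearMap.ker S.g.hom ⧸ LinearMap.range S.moduleCatToCycles) :=
    (LinearMap.range S.moduleCatToCycles).mkQ ∘ₗ q'
  have hg's : Function.Surjective g' := by
    intro m
    obtain ⟨⟨⟨x, y⟩, hm⟩, rfl⟩ := Submodule.mkQ_surjective _ m
    obtain ⟨w, hw⟩ := DD_ker t u h1 h2 x y (congrArg (fun z : J × J => (z.1 : R)) hm)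
    refine ⟨w, congrArg _ (Subtype.ext ?_)⟩
    exact Prod.ext (Subtype.ext (congrArg Prod.fst hw)) (Subtype.ext (congrArg Prod.snd hw))
  have hg'k : ∀ v, g' v = 0 ↔ v.1 ∈ J ∧ v.2 ∈ J := by
    intro v
    have : g' v = 0 ↔ q' v ∈ LinearMap.range S.moduleCatToCycles :=
      Submodule.Quotient.mk_eq_zero _
    rw [this]
    constructor
    · rintro ⟨w, hw⟩
      have hw : DD t u J w = q v := congrArg Subtype.val hw
      rw [hDJ] at hw
      have h0 : DD t u R (v - (((w : J × J).1 : R), (w.2 : R))) = 0 := by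
        rw [map_sub, ← hq, ← hq, hw, sub_self]
      obtain ⟨k, hk⟩ := DD_ker t u h1 h2 _ _ (congrArg Prod.fst h0)
      have k1 : u * k.1 + t * k.2 = v.1 - w.1 := congrArg Prod.fst hk
      have k2 : - (u * k.2) = v.2 - w.2 := congrArg Prod.snd hk
      constructor
      · rw [show v.1 = u * k.1 + t * k.2 + w.1 by linear_combination -k1]
        exact add_mem (add_mem (Ideal.mul_mem_right _ _ uJ) (Ideal.mul_mem_right _ _ tJ)) w.1.2
      · rw [show v.2 = - (u * k.2) + w.2 by linear_combination -k2]
        exact add_mem (neg_mem (Ideal.mul_mem_right _ _ uJ)) w.2.2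
    · rintro ⟨a, b⟩
      exact ⟨((⟨v.1, a⟩, ⟨v.2, b⟩) : J × J), Subtype.ext rfl⟩
  refine ⟨E.symm.toLinearMap ∘ₗ g', E.symm.surjective.comp hg's, fun v => ?_⟩
  rw [← hg'k]
  exact E.symm.map_eq_zero_iff
end Ring

section Balg
variable (p : ℕ)

lemma uB_mul_uB : uB p * uB p = 0 := by
  rw [uB, ← map_mul, Ideal.Quotient.eq_zero_iff_mem, ← sq]
  exact Ideal.mem_span_singleton_self _

lemma uB_ann [Fact p.Prime] (y : Balg p) (h : uB p * y = 0) : ∃ z, y = uB p * z := by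
  obtain ⟨f, rfl⟩ := Ideal.Quotient.mk_surjective y
  rw [uB, ← map_mul, Ideal.Quotient.eq_zero_iff_mem, Ideal.mem_span_singleton, sq] at h
  obtain ⟨g, rfl⟩ := (mul_dvd_mul_iff_left (MvPolynomial.X_ne_zero 1)).1 h
  exact ⟨Ideal.Quotient.mk _ g, map_mul _ _ _⟩

lemma tB_ann [Fact p.Prime] (x y : Balg p) (h : uB p * x + tB p * y = 0) : ∃ z, y = uB p * z := by
  obtain ⟨f, rfl⟩ := Ideal.Quotient.mk_surjective y
  obtain ⟨e, rfl⟩ := Ideal.Quotient.mk_surjective x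
  rw [uB, tB, ← map_mul, ← map_mul, ← map_add, Ideal.Quotient.eq_zero_iff_mem,
    Ideal.mem_span_singleton] at h
  have h' : (MvPolynomial.X 1 : MvPolynomial (Fin 2) (ZMod p)) ∣ MvPolynomial.X 0 * f :=
    (dvd_add_right (dvd_mul_right _ e)).1 ((dvd_pow_self _ two_ne_zero).trans h)
  have hpr : Prime (MvPolynomial.X 1 : MvPolynomial (Fin 2) (ZMod p)) := MvPolynomial.X_prime
  rcases hpr.dvd_or_dvd h' with h'' | h''
  · rw [MvPolynomial.X_dvd_X] at h''
    simp at h''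
  · obtain ⟨g, rfl⟩ := h''
    exact ⟨Ideal.Quotient.mk _ g, map_mul _ _ _⟩

/-- The augmentation. -/
noncomputable def aug : Balg p →+* ZMod p :=
  Ideal.Quotient.lift _ (MvPolynomial.constantCoeff (R := ZMod p)) (by
    intro a ha
    obtain ⟨b, rfl⟩ := Ideal.mem_span_singleton.1 ha
    simp)

lemma aug_mem (x : Balg p) (hx : x ∈ Jid p) : aug p x = 0 := by
  have : Jid p ≤ RingHom.ker (aug p) := by
    rw [Jid, Ideal.span_le]
    rintro y (rfl | rfl)
    · exact (Ideal.Quotient.lift_mk _ _ _).trans (MvPolynomial.constantCoeff_X _ _)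
    · exact (Ideal.Quotient.lift_mk _ _ _).trans (MvPolynomial.constantCoeff_X _ _)
  exact this hx

lemma aug_alg (c : ZMod p) : aug p (algebraMap (ZMod p) (Balg p) c) = c :=
  (Ideal.Quotient.lift_mk _ _ _).trans (MvPolynomial.constantCoeff_C _ c)

lemma Balg_const (x : Balg p) : ∃ c : ZMod p, x - algebraMap (ZMod p) (Balg p) c ∈ Jid p := by
  obtain ⟨f, rfl⟩ := Ideal.Quotient.mk_surjective x
  induction f using MvPolynomial.induction_on with
  | C a => exact ⟨a, by
      have : (Ideal.Quotient.mk _ (MvPolynomial.C a) : Balg p) = algebraMap (ZMod p) (Balg p) a := rfl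
      rw [this, sub_self]; exact zero_mem _⟩
  | add f g hf hg =>
    obtain ⟨a, ha⟩ := hf
    obtain ⟨b, hb⟩ := hg
    refine ⟨a + b, ?_⟩
    rw [map_add, map_add, add_sub_add_comm]
    exact add_mem ha hb
  | mul_X f i _ =>
    refine ⟨0, ?_⟩
    rw [map_zero, sub_zero, map_mul]
    apply Ideal.mul_mem_left
    apply Ideal.subset_span
    fin_cases i
    · exact Or.inl rfl
    · exact Or.inr rfl
end Balg

/-- For an odd prime `p`, `B = 𝔽_p[t,u]/(u²)` and `J = (t,u) ⊆ B`, for every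
`i ≥ 1` the `B`-module `Tor_i^B(J,J)` is annihilated by `J` and is a 2-dimensional
`𝔽_p`-vector space (i.e. it has a basis of two elements over `𝔽_p`, acting through `B`). -/
theorem statement6 (p : ℕ) (hp : p.Prime) (hodd : p ≠ 2) (i : ℕ) (hi : 1 ≤ i) :
    (∀ x ∈ Jid p, ∀ m : (((Tor (ModuleCat (Balg p)) i).obj
        (ModuleCat.of (Balg p) (Jid p))).obj (ModuleCat.of (Balg p) (Jid p)) : ModuleCat (Balg p)),
      x • m = 0) ∧
    ∃ a b : (((Tor (ModuleCat (Balg p)) i).obj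
        (ModuleCat.of (Balg p) (Jid p))).obj (ModuleCat.of (Balg p) (Jid p)) : ModuleCat (Balg p)),
      ∀ m : (((Tor (ModuleCat (Balg p)) i).obj
        (ModuleCat.of (Balg p) (Jid p))).obj (ModuleCat.of (Balg p) (Jid p)) : ModuleCat (Balg p)),
        ∃! c : ZMod p × ZMod p,
          m = algebraMap (ZMod p) (Balg p) c.1 • a + algebraMap (ZMod p) (Balg p) c.2 • b := by
  have : Fact p.Prime := ⟨hp⟩
  obtain ⟨n, rfl⟩ : ∃ n, i = n + 1 := ⟨i - 1, by omega⟩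
  obtain ⟨g, hs, hk⟩ := torJ (tB p) (uB p) (uB_mul_uB p) (uB_ann p) (tB_ann p) (Jid p) rfl n
  refine ⟨?_, g (1, 0), g (0, 1), ?_⟩
  · intro x hx m
    obtain ⟨v, rfl⟩ := hs m
    rw [← map_smul, hk]
    exact ⟨Ideal.mul_mem_right _ _ hx, Ideal.mul_mem_right _ _ hx⟩
  · intro m
    obtain ⟨v, rfl⟩ := hs m
    have key : ∀ c : ZMod p × ZMod p,
        (g v = algebraMap (ZMod p) (Balg p) c.1 • g (1, 0) +
          algebraMap (ZMod p) (Balg p) c.2 • g (0, 1)) ↔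
        v.1 - algebraMap (ZMod p) (Balg p) c.1 ∈ Jid p ∧
          v.2 - algebraMap (ZMod p) (Balg p) c.2 ∈ Jid p := by
      intro c
      rw [← map_smul, ← map_smul, ← map_add, ← sub_eq_zero, ← map_sub, hk]
      simp [Algebra.algebraMap_eq_smul_one]
    obtain ⟨a, ha⟩ := Balg_const p v.1
    obtain ⟨b, hb⟩ := Balg_const p v.2
    refine ⟨(a, b), (key _).2 ⟨ha, hb⟩, fun c hc => ?_⟩
    obtain ⟨h1, h2⟩ := (key c).1 hc
    have e1 := aug_mem p _ h1
    have e2 := aug_mem p _ h2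
    have e3 := aug_mem p _ ha
    have e4 := aug_mem p _ hb
    rw [map_sub, aug_alg, sub_eq_zero] at e1 e2 e3 e4
    exact Prod.ext (e1.symm.trans e3) (e2.symm.trans e4)
end
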